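/- Let N = 2^v p_1^{s_1} p_2^{s_2} ⋯ p_n^{s_n}, where v > 0, the p_i are distinct odd primes, the s_i are positive integers, and 2 is a primitive root both modulo p_i and modulo p_i^2 for every 1 ≤ i ≤ n. Let 1 ≤ k ≤ N and let S be an N-periodic binary sequence such that L(S) > L_{N,k}(S) ≥ N - min(2^v, p_1 - 2, ..., p_n - 2). Then, with Z = 2^{⌈log_2(N - L_{N,k}(S))⌉}, one has L_{N,k}(S) = L_{N,k;Z}(S). -/

import Mathlib

/-- Generating polynomial `S^N(x) = s_0 + s_1 x + ... + s_{N-1} x^{N-1}` of one period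
of an `N`-periodic binary sequence. -/
noncomputable def genPoly {N : ℕ} (S : Fin N → ZMod 2) : Polynomial (ZMod 2) :=
  ∑ i : Fin N, Polynomial.C (S i) * Polynomial.X ^ (i : ℕ)

/-- Linear complexity `L(S) = N - deg (gcd (1 - x^N, S^N(x)))`. -/
noncomputable def linComp {N : ℕ} (S : Fin N → ZMod 2) : ℕ :=
  N - (EuclideanDomain.gcd (1 - Polynomial.X ^ N) (genPoly S)).natDegree

/-- Hamming weight of one period of an `N`-periodic binary sequence. -/
def wt {N : ℕ} (T : Fin N → ZMod 2) : ℕ :=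
  (Finset.univ.filter (fun i => T i ≠ 0)).card

/-- `k`-error linear complexity `L_{N,k}(S)`. -/
noncomputable def errLC {N : ℕ} (S : Fin N → ZMod 2) (k : ℕ) : ℕ :=
  sInf {c | ∃ T : Fin N → ZMod 2, wt T ≤ k ∧ linComp (S + T) = c}

/-- `k`-error linear complexity with a zone of length `Z`: `L_{N,k;Z}(S)`. -/
noncomputable def errLCZone {N : ℕ} (S : Fin N → ZMod 2) (k Z : ℕ) : ℕ :=
  sInf {c | ∃ T : Fin N → ZMod 2, wt T ≤ k ∧ (∀ i : Fin N, Z ≤ (i : ℕ) → T i = 0) ∧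
    linComp (S + T) = c}

/-- `E_1(j)`: the sequence whose only nonzero term in one period is a `1` at position `j`. -/
def E1 {N : ℕ} (j : Fin N) : Fin N → ZMod 2 :=
  fun i => if i = j then 1 else 0

/-!
Let `g` be the gcd of `1 - X ^ N` with the generating polynomial of `S + T`, for a `k`-error `T`
attaining `L_{N,k}(S)`; its degree is `d = N - L_{N,k}(S)`. A root of an irreducible factor of `g`
has order dividing both `N` and `2 ^ e - 1` for some `0 < e ≤ d`. These numbers are coprime when the
order of `2` modulo each odd prime factor of `N` exceeds `d`, so the root is `1` and `g` is a power
of `X - 1`. In characteristic two `g` then divides `X ^ Z - 1` for the least power of two `Z ≥ d`.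
Hence `T` may be reduced modulo `X ^ Z - 1`, which moves all its errors into the first `Z`
positions, does not increase its weight and keeps `g` as a common divisor.
-/

open Polynomial

lemma coprime_pow_sub_one_iff_forall_not_orderOf_dvd {a : ℕ} (ha : a ≠ 0) (d N : ℕ) :
    (a ^ d - 1).Coprime N ↔
      ∀ p : ℕ, p.Prime → p ∣ N → ¬ orderOf (a : ZMod p) ∣ d := by
  have dvd_iff (p : ℕ) : p ∣ a ^ d - 1 ↔ orderOf (a : ZMod p) ∣ d := by
    rw [orderOf_dvd_iff_pow_eq_one, ← ZMod.natCast_eq_zero_iff,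
      Nat.cast_sub (Nat.one_le_pow _ _ ha.bot_lt), Nat.cast_pow, Nat.cast_one, sub_eq_zero]
  rw [← not_iff_not, Nat.Prime.not_coprime_iff_dvd]
  simp only [dvd_iff]
  grind

lemma coprime_two_pow_sub_one_of_lt_orderOf {d N : ℕ} (hd : d ≠ 0)
    (hord : ∀ p : ℕ, p.Prime → p ∣ N → p ≠ 2 → d < orderOf (2 : ZMod p)) :
    (2 ^ d - 1).Coprime N := by
  refine (coprime_pow_sub_one_iff_forall_not_orderOf_dvd two_ne_zero d N).2
    fun p hp hpN hdvd => ?_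
  obtain rfl | hp2 := eq_or_ne p 2
  · have orderOf_two : orderOf ((2 : ℕ) : ZMod 2) = 0 := by
      rw [ZMod.natCast_self, orderOf_zero]
    exact hd (zero_dvd_iff.1 (orderOf_two ▸ hdvd))
  · exact (hord p hp hpN hp2).not_ge (Nat.le_of_dvd hd.bot_lt hdvd)

lemma pow_sub_one_dvd_pow_sub_pow_mod {R : Type*} [CommRing R] (a : R) (m Z : ℕ) :
    a ^ Z - 1 ∣ a ^ m - a ^ (m % Z) := by
  have factored : a ^ m - a ^ (m % Z) = a ^ (m % Z) * ((a ^ Z) ^ (m / Z) - 1) := by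
    rw [mul_sub, ← pow_mul, ← pow_add, Nat.mod_add_div, mul_one]
  rw [factored]
  exact (sub_one_dvd_pow_sub_one _ _).mul_left _

lemma one_sub_X_pow_ne_zero (R : Type*) [Ring R] [Nontrivial R] {N : ℕ} (hN : N ≠ 0) :
    (1 - X ^ N : R[X]) ≠ 0 := by
  rw [← neg_ne_zero, neg_sub]
  exact X_pow_sub_C_ne_zero hN.bot_lt 1

lemma natDegree_one_sub_X_pow (R : Type*) [Ring R] [Nontrivial R] (N : ℕ) :
    (1 - X ^ N : R[X]).natDegree = N := by
  rw [← natDegree_neg, neg_sub]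
  exact natDegree_X_pow_sub_C (r := 1)

section Field

variable {F : Type*} [Field F]

lemma associated_X_sub_C_pow_natDegree_of_forall_irreducible {g : F[X]} (hg : g ≠ 0) {a : F}
    (h : ∀ q, Irreducible q → q ∣ g → Associated q (X - C a)) :
    Associated g ((X - C a) ^ g.natDegree) := by
  classical
  have factor_eq {q : F[X]} (hq : q ∈ UniqueFactorizationMonoid.normalizedFactors g) :
      q = X - C a := by
    obtain ⟨hirr, hmonic, hdvd⟩ := (Polynomial.mem_normalizedFactors_iff hg).1 hq
    exact eq_of_monic_of_associated hmonic (monic_X_sub_C a) (h q hirr hdvd)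
  obtain ⟨m, hm⟩ :=
    UniqueFactorizationMonoid.exists_associated_prime_pow_of_unique_normalized_factor factor_eq hg
  have degree_eq : g.natDegree = m := by
    rw [← natDegree_eq_of_degree_eq (degree_eq_degree_of_associated hm), natDegree_pow,
      natDegree_X_sub_C, mul_one]
  rw [degree_eq]
  exact hm.symm

variable [Finite F] {N : ℕ}

lemma associated_X_sub_C_one_of_irreducible_of_dvd_X_pow_sub_one {f : F[X]} (hf : Irreducible f)
    (hN : N ≠ 0) (hdvd : f ∣ X ^ N - 1) (hcop : (Nat.card F ^ f.natDegree - 1).Coprime N) :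
    Associated f (X - C 1) := by
  set α := AdjoinRoot.root f
  have pow_N : α ^ N = 1 := by
    simpa [sub_eq_zero] using AdjoinRoot.mk_eq_zero.2 hdvd
  have pow_card : α ^ Nat.card F ^ f.natDegree = α := by
    simpa [sub_eq_zero] using
      AdjoinRoot.mk_eq_zero.2 (hf.natDegree_dvd_iff_dvd_X_pow_card_pow_sub_X.1 dvd_rfl)
  have pow_card_sub_one : α ^ (Nat.card F ^ f.natDegree - 1) = 1 := by
    refine (IsUnit.of_pow_eq_one pow_N hN).mul_left_injective ?_
    simp only [one_mul]
    rw [pow_sub_one_mul (pow_ne_zero _ Nat.card_pos.ne'), pow_card]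
  have root_eq_one : α = 1 :=
    (pow_eq_one_iff_of_coprime hcop).1 ⟨pow_card_sub_one, pow_N⟩
  refine hf.associated_of_dvd (irreducible_X_sub_C 1) (AdjoinRoot.mk_eq_zero.1 ?_)
  simpa [sub_eq_zero] using root_eq_one

lemma dvd_X_pow_char_pow_sub_one_of_dvd_X_pow_sub_one (p : ℕ) [ExpChar F p] {g : F[X]} {e : ℕ}
    (hN : N ≠ 0) (hdvd : g ∣ X ^ N - 1)
    (hcop : ∀ d, d ≠ 0 → d ≤ g.natDegree → (Nat.card F ^ d - 1).Coprime N)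
    (hdeg : g.natDegree ≤ p ^ e) : g ∣ X ^ p ^ e - 1 := by
  have hg : g ≠ 0 := ne_zero_of_dvd_ne_zero (X_pow_sub_C_ne_zero hN.bot_lt 1) hdvd
  have assoc : Associated g ((X - C 1) ^ g.natDegree) :=
    associated_X_sub_C_pow_natDegree_of_forall_irreducible hg fun q hq hqg =>
      associated_X_sub_C_one_of_irreducible_of_dvd_X_pow_sub_one hq hN (hqg.trans hdvd)
        (hcop _ hq.natDegree_pos.ne' (natDegree_le_of_dvd hqg hg))
  have frobenius : (X - C 1 : F[X]) ^ p ^ e = X ^ p ^ e - 1 := by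
    rw [sub_pow_expChar_pow, map_one, one_pow]
  exact frobenius ▸ assoc.dvd.trans (pow_dvd_pow _ hdeg)

end Field

section LinearComplexity

variable {N : ℕ}

lemma genPoly_add (S T : Fin N → ZMod 2) : genPoly (S + T) = genPoly S + genPoly T := by
  simp [genPoly, add_mul, Finset.sum_add_distrib]

lemma natDegree_gcd_eq_sub_linComp (hN : N ≠ 0) (S : Fin N → ZMod 2) :
    (EuclideanDomain.gcd (1 - X ^ N) (genPoly S)).natDegree = N - linComp S := by
  have natDegree_le : (EuclideanDomain.gcd (1 - X ^ N) (genPoly S)).natDegree ≤ N :=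
    (natDegree_le_of_dvd (EuclideanDomain.gcd_dvd_left _ _)
      (one_sub_X_pow_ne_zero _ hN)).trans_eq (natDegree_one_sub_X_pow _ N)
  exact (Nat.sub_sub_self natDegree_le).symm

lemma linComp_le_of_gcd_dvd_genPoly (hN : N ≠ 0) {S S' : Fin N → ZMod 2}
    (h : EuclideanDomain.gcd (1 - X ^ N) (genPoly S) ∣ genPoly S') :
    linComp S' ≤ linComp S :=
  Nat.sub_le_sub_left (natDegree_le_of_dvd
    (EuclideanDomain.dvd_gcd (EuclideanDomain.gcd_dvd_left _ _) h)
    (ne_zero_of_dvd_ne_zero (one_sub_X_pow_ne_zero _ hN) (EuclideanDomain.gcd_dvd_left _ _))) N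

lemma wt_zero : wt (0 : Fin N → ZMod 2) = 0 := by
  simp [wt]

lemma exists_linComp_add_eq_errLC (S : Fin N → ZMod 2) (k : ℕ) :
    ∃ T : Fin N → ZMod 2, wt T ≤ k ∧ linComp (S + T) = errLC S k :=
  Nat.sInf_mem (s := {c | ∃ T : Fin N → ZMod 2, wt T ≤ k ∧ linComp (S + T) = c})
    ⟨_, 0, wt_zero.trans_le k.zero_le, rfl⟩

lemma errLC_le_errLCZone (S : Fin N → ZMod 2) (k Z : ℕ) : errLC S k ≤ errLCZone S k Z :=
  csInf_le_csInf (OrderBot.bddBelow _)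
    ⟨_, 0, wt_zero.trans_le k.zero_le, fun _ _ => rfl, rfl⟩
    fun _ ⟨T, hwt, _, hT⟩ => ⟨T, hwt, hT⟩

/-- The fold of one period `T` modulo `Z`: all terms at positions congruent modulo `Z` are added up
at their least residue, so that `genPoly (foldSeq Z T)` is the remainder of `genPoly T` modulo
`X ^ Z - 1`. The result keeps the period `N`, with zeros from position `Z` on. -/
def foldSeq (Z : ℕ) (T : Fin N → ZMod 2) : Fin N → ZMod 2 :=
  fun i => ∑ j with j.val % Z = i.val, T j

lemma foldSeq_apply_eq_zero {Z : ℕ} (hZ : Z ≠ 0) (T : Fin N → ZMod 2) {i : Fin N}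
    (hi : Z ≤ (i : ℕ)) : foldSeq Z T i = 0 := by
  refine Finset.sum_eq_zero fun j hj => absurd (Finset.mem_filter.1 hj).2 ?_
  exact ((Nat.mod_lt _ hZ.bot_lt).trans_le hi).ne

lemma wt_foldSeq_le (Z : ℕ) (T : Fin N → ZMod 2) : wt (foldSeq Z T) ≤ wt T := by
  refine Finset.card_le_card_of_forall_subsingleton (fun i j => j.val % Z = i.val) ?_ ?_
  · intro i hi
    obtain ⟨j, hj, hTj⟩ := Finset.exists_ne_zero_of_sum_ne_zero (Finset.mem_filter.1 hi).2
    exact ⟨j, Finset.mem_filter.2 ⟨Finset.mem_univ j, hTj⟩, (Finset.mem_filter.1 hj).2⟩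
  · rintro j - i ⟨-, hi⟩ i' ⟨-, hi'⟩
    exact Fin.ext (hi.symm.trans hi')

lemma genPoly_foldSeq (Z : ℕ) (T : Fin N → ZMod 2) :
    genPoly (foldSeq Z T) = ∑ j : Fin N, C (T j) * X ^ ((j : ℕ) % Z) := by
  let residue (j : Fin N) : Fin N := ⟨j % Z, (Nat.mod_le _ _).trans_lt j.isLt⟩
  rw [genPoly, ← Finset.sum_fiberwise Finset.univ residue fun j => C (T j) * X ^ (j.val % Z)]
  refine Finset.sum_congr rfl fun i _ => ?_
  simp only [foldSeq, map_sum, Finset.sum_mul, residue, Fin.ext_iff]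
  exact Finset.sum_congr rfl fun j hj => by rw [(Finset.mem_filter.1 hj).2]

lemma X_pow_sub_one_dvd_genPoly_sub_genPoly_foldSeq (Z : ℕ) (T : Fin N → ZMod 2) :
    (X ^ Z - 1 : (ZMod 2)[X]) ∣ genPoly T - genPoly (foldSeq Z T) := by
  rw [genPoly_foldSeq, genPoly, ← Finset.sum_sub_distrib]
  refine Finset.dvd_sum fun j _ => ?_
  rw [← mul_sub]
  exact (pow_sub_one_dvd_pow_sub_pow_mod X j Z).mul_left _

lemma linComp_add_foldSeq_le (hN : N ≠ 0) {Z : ℕ} (S T : Fin N → ZMod 2)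
    (hdvd : EuclideanDomain.gcd (1 - X ^ N) (genPoly (S + T)) ∣ X ^ Z - 1) :
    linComp (S + foldSeq Z T) ≤ linComp (S + T) := by
  refine linComp_le_of_gcd_dvd_genPoly hN ?_
  have genPoly_eq : genPoly (S + foldSeq Z T)
      = genPoly (S + T) - (genPoly T - genPoly (foldSeq Z T)) := by
    rw [genPoly_add, genPoly_add]
    ring
  rw [genPoly_eq]
  exact dvd_sub (EuclideanDomain.gcd_dvd_right _ _)
    (hdvd.trans (X_pow_sub_one_dvd_genPoly_sub_genPoly_foldSeq Z T))

lemma errLCZone_le_linComp_add (hN : N ≠ 0) {k Z : ℕ} (hZ : Z ≠ 0) (S : Fin N → ZMod 2)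
    {T : Fin N → ZMod 2} (hwt : wt T ≤ k)
    (hdvd : EuclideanDomain.gcd (1 - X ^ N) (genPoly (S + T)) ∣ X ^ Z - 1) :
    errLCZone S k Z ≤ linComp (S + T) := by
  have errLCZone_le : errLCZone S k Z ≤ linComp (S + foldSeq Z T) :=
    Nat.sInf_le ⟨foldSeq Z T, (wt_foldSeq_le Z T).trans hwt,
      fun _ hi => foldSeq_apply_eq_zero hZ T hi, rfl⟩
  exact errLCZone_le.trans (linComp_add_foldSeq_le hN S T hdvd)

theorem stmt18_general (hN : N ≠ 0) (k : ℕ) (S : Fin N → ZMod 2)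
    (hord : ∀ p : ℕ, p.Prime → p ∣ N → p ≠ 2 → N - errLC S k < orderOf (2 : ZMod p)) :
    errLC S k = errLCZone S k (2 ^ Nat.clog 2 (N - errLC S k)) := by
  obtain ⟨T, hwt, hT⟩ := exists_linComp_add_eq_errLC S k
  have natDegree_gcd := hT ▸ natDegree_gcd_eq_sub_linComp hN (S + T)
  have gcd_dvd : EuclideanDomain.gcd (1 - X ^ N) (genPoly (S + T))
      ∣ X ^ 2 ^ Nat.clog 2 (N - errLC S k) - 1 := by
    refine dvd_X_pow_char_pow_sub_one_of_dvd_X_pow_sub_one 2 hN ?_ (fun d hd hdle => ?_) ?_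
    · exact dvd_sub_comm.1 (EuclideanDomain.gcd_dvd_left _ _)
    · rw [Nat.card_zmod]
      exact coprime_two_pow_sub_one_of_lt_orderOf hd fun p hp hpN hp2 =>
        (hdle.trans_eq natDegree_gcd).trans_lt (hord p hp hpN hp2)
    · exact natDegree_gcd.trans_le (Nat.le_pow_clog one_lt_two _)
  exact (errLC_le_errLCZone S k _).antisymm
    ((errLCZone_le_linComp_add hN (by positivity) S hwt gcd_dvd).trans_eq hT)

end LinearComplexity

section PrimitiveRoot

variable {ι : Type*} [Fintype ι] {p : ι → ℕ} (v : ℕ) (s : ι → ℕ)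

lemma two_pow_mul_prod_pow_ne_zero (hp : ∀ i, (p i).Prime) : 2 ^ v * ∏ i, p i ^ s i ≠ 0 :=
  mul_ne_zero (by positivity) (Finset.prod_ne_zero_iff.2 fun i _ => pow_ne_zero _ (hp i).ne_zero)

variable {v s}

lemma exists_eq_of_prime_dvd_two_pow_mul_prod_pow (hp : ∀ i, (p i).Prime) {q : ℕ} (hq : q.Prime)
    (hdvd : q ∣ 2 ^ v * ∏ i, p i ^ s i) (hq2 : q ≠ 2) : ∃ i, q = p i := by
  obtain h2 | hprod := hq.dvd_mul.1 hdvd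
  · exact absurd ((Nat.prime_dvd_prime_iff_eq hq Nat.prime_two).1 (hq.dvd_of_dvd_pow h2)) hq2
  · obtain ⟨i, -, hi⟩ := (hq.prime.dvd_finsetProd_iff _).1 hprod
    exact ⟨i, (Nat.prime_dvd_prime_iff_eq hq (hp i)).1 (hq.dvd_of_dvd_pow hi)⟩

lemma lt_orderOf_two_of_prime_dvd_two_pow_mul_prod_pow (hp : ∀ i, (p i).Prime)
    (hprim : ∀ i, orderOf (2 : ZMod (p i)) = Nat.totient (p i)) {d : ℕ}
    (hd : ∀ i, d ≤ p i - 2) (q : ℕ) (hq : q.Prime) (hdvd : q ∣ 2 ^ v * ∏ i, p i ^ s i)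
    (hq2 : q ≠ 2) : d < orderOf (2 : ZMod q) := by
  obtain ⟨i, rfl⟩ := exists_eq_of_prime_dvd_two_pow_mul_prod_pow hp hq hdvd hq2
  rw [hprim, Nat.totient_prime (hp i)]
  have := hd i
  have := (hp i).two_le
  omega

end PrimitiveRoot

/-- For `N = 2^v p_1^{s_1} ⋯ p_n^{s_n}` with `2` a primitive root mod each `p_i` and
`p_i^2`, and `L(S) > L_{N,k}(S) ≥ N - min(2^v, p_1-2, ..., p_n-2)`:
`L_{N,k}(S) = L_{N,k;Z}(S)` for `Z = 2^{⌈log₂(N - L_{N,k}(S))⌉}`. -/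
theorem stmt18 (v n k : ℕ) (hv : 0 < v) (hn : 0 < n)
    (p s : Fin n → ℕ)
    (hp : ∀ i, (p i).Prime) (hop : ∀ i, Odd (p i))
    (hs : ∀ i, 0 < s i)
    (hinj : Function.Injective p)
    (hprim1 : ∀ i, orderOf (2 : ZMod (p i)) = Nat.totient (p i))
    (hprim2 : ∀ i, orderOf (2 : ZMod ((p i)^2)) = Nat.totient ((p i)^2))
    (hk1 : 1 ≤ k) (hk : k ≤ 2^v * ∏ i, p i ^ s i)
    (S : Fin (2^v * ∏ i, p i ^ s i) → ZMod 2)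
    (hgt : errLC S k < linComp S)
    (hge1 : 2^v * (∏ i, p i ^ s i) - 2^v ≤ errLC S k)
    (hge2 : ∀ j, 2^v * (∏ i, p i ^ s i) - (p j - 2) ≤ errLC S k) :
    errLC S k
      = errLCZone S k (2^(Nat.clog 2 (2^v * (∏ i, p i ^ s i) - errLC S k))) :=
  stmt18_general (two_pow_mul_prod_pow_ne_zero v s hp) k S
    (lt_orderOf_two_of_prime_dvd_two_pow_mul_prod_pow hp hprim1
      fun j => tsub_le_iff_tsub_le.1 (hge2 j))
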